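/- For any nonzero a ∈ ℤⁿ with n ≥ 5, there exists a nonzero x ∈ ℤⁿ with a₁x₁ + … + a_nx_n = 0 and ‖x‖_∞^{n−1} < ‖a‖_∞ / σ_n. -/

import Mathlib

open MeasureTheory

noncomputable def sigma (n : ℕ) : ℝ :=
  (2 / Real.pi) * ∫ t in Set.Ioi (0:ℝ), (Real.sin t / t) ^ n

/-!
Write `A` for the sup norm of `a`. Minkowski's theorem gives a nonzero integer point of the
hyperplane `a ⬝ᵥ x = 0` in the cube of half-side `r` as soon as some slab `|a ⬝ᵥ u| < ε` of the cube
`[-1, 1]ⁿ` has volume larger than `2ⁿ ε / rⁿ⁻¹`. So it suffices that for small `ε` the volume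
exceeds `2ⁿ σ_n ε / A`.

Integrating over one coordinate at a time computes the volume by smearing the indicator of `(-ε, ε)`
over the segments `[-aᵢ, aᵢ]`. Smearing preserves even functions decreasing away from the origin,
and the value at `0` of a smeared such function decreases in `|aᵢ|`. The volume is therefore
smallest when all `|aᵢ|` equal `A`; in that case its derivative in `ε` at `0` is, up to scaling, the
central density of a sum of independent uniform variables, which Fourier inversion identifies with
`σ_n`. A single coefficient with `|aⱼ| < A` makes the comparison strict, and when there is none, two
coefficients agree up to sign and a vector with two entries `±1` does it, because `σ_n < 1`.
-/

open Set FourierTransform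

/-- The unnormalised average of `h` over the segment with centre `c` and half-length `|b|`,
parametrised by `[-1, 1]` so that `b = 0` needs no separate treatment. For `b > 0` it is the
convolution of `h` with `b⁻¹` times the indicator of `(-b, b)`. Integrating out one coordinate of a
cube amounts to one smearing. -/
noncomputable def smear {E : Type*} [NormedAddCommGroup E] [NormedSpace ℝ E]
    (b : ℝ) (h : ℝ → E) (c : ℝ) : E :=
  ∫ u in (-1 : ℝ)..1, h (c + b * u)

/-- The indicator function of `(-δ, δ)`, which cuts the slab `|a ⬝ᵥ u| < δ` out of a cube. -/
noncomputable def window (δ : ℝ) : ℝ → ℝ :=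
  (Metric.ball 0 δ).indicator 1

/-- Nonnegative even functions that decrease away from the origin: the symmetric unimodal profiles,
a class stable under smearing on which central values can be compared. -/
structure SymmUnimodal (h : ℝ → ℝ) : Prop where
  even : Function.Even h
  antitoneOn : AntitoneOn h (Ici 0)
  nonneg : 0 ≤ h

/-! ### Smearing over a segment -/

section Smear

variable {E : Type*} [NormedAddCommGroup E] [NormedSpace ℝ E] {b : ℝ}

lemma smear_neg_left (b : ℝ) (h : ℝ → E) : smear (-b) h = smear b h := by
  funext c
  simpa [smear] using
    intervalIntegral.integral_comp_neg (a := -1) (b := 1) fun u ↦ h (c + b * u)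

lemma smear_abs_left (b : ℝ) (h : ℝ → E) : smear |b| h = smear b h := by
  rcases abs_choice b with hb | hb <;> rw [hb]
  exact smear_neg_left b h

lemma smear_zero_left [CompleteSpace E] (h : ℝ → E) : smear 0 h = (2 : ℝ) • h := by
  funext c
  simp only [smear, zero_mul, add_zero, intervalIntegral.integral_const, Pi.smul_apply]
  norm_num

lemma smear_const_mul (b k : ℝ) (h : ℝ → ℝ) :
    smear b (fun x ↦ k * h x) = fun x ↦ k * smear b h x :=
  funext fun _ ↦ intervalIntegral.integral_const_mul _ _

lemma smear_eq_inv_smul_integral (hb : b ≠ 0) (h : ℝ → E) (c : ℝ) :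
    smear b h c = b⁻¹ • ∫ x in (c - b)..(c + b), h x := by
  simp [smear, intervalIntegral.integral_comp_add_mul _ hb, sub_eq_add_neg]

lemma even_smear {h : ℝ → E} (hh : Function.Even h) (b : ℝ) : Function.Even (smear b h) := by
  intro c
  refine (intervalIntegral.integral_congr fun u _ ↦ ?_).trans (congrFun (smear_neg_left b h) c)
  rw [← hh, neg_add, neg_neg, neg_mul]

lemma smear_sub_smear {h : ℝ → E} (hh : ∀ x y, IntervalIntegrable h volume x y) (hb : b ≠ 0)
    (c d : ℝ) :
    smear b h c - smear b h d = b⁻¹ • ∫ x in c..d, (h (x - b) - h (x + b)) := by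
  have hsub : IntervalIntegrable (fun x ↦ h (x - b)) volume c d := by
    simpa using (hh (c - b) (d - b)).comp_sub_right b
  have hadd : IntervalIntegrable (fun x ↦ h (x + b)) volume c d := by
    simpa using (hh (c + b) (d + b)).comp_add_right b
  rw [smear_eq_inv_smul_integral hb, smear_eq_inv_smul_integral hb, ← smul_sub,
    intervalIntegral.integral_sub hsub hadd, intervalIntegral.integral_comp_sub_right,
    intervalIntegral.integral_comp_add_right,
    intervalIntegral.integral_interval_sub_interval_comm (hh _ _) (hh _ _) (hh _ _)]

lemma continuous_smear {h : ℝ → E} (hh : ∀ x y, IntervalIntegrable h volume x y) (hb : b ≠ 0) :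
    Continuous (smear b h) := by
  have hprim := intervalIntegral.continuous_primitive hh 0
  have hsmear (c : ℝ) : smear b h c =
      b⁻¹ • ((∫ x in (0 : ℝ)..(c + b), h x) - ∫ x in (0 : ℝ)..(c - b), h x) := by
    rw [smear_eq_inv_smul_integral hb,
      intervalIntegral.integral_interval_sub_left (hh _ _) (hh _ _)]
  simp only [funext hsmear]
  fun_prop

end Smear

namespace SymmUnimodal

variable {h : ℝ → ℝ}

lemma apply_abs (hh : SymmUnimodal h) (x : ℝ) : h |x| = h x := by
  rcases abs_choice x with hx | hx <;> rw [hx]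
  exact hh.even x

lemma apply_le_of_abs_le (hh : SymmUnimodal h) {x y : ℝ} (hxy : |x| ≤ |y|) : h y ≤ h x := by
  rw [← hh.apply_abs x, ← hh.apply_abs y]
  exact hh.antitoneOn (abs_nonneg x) (abs_nonneg y) hxy

lemma measurable (hh : SymmUnimodal h) : Measurable h := by
  have hanti : Antitone fun x ↦ h (max x 0) := fun x y hxy ↦
    hh.antitoneOn (le_max_right x 0) (le_max_right y 0) (max_le_max_right 0 hxy)
  have hcomp : h = (fun x ↦ h (max x 0)) ∘ fun x ↦ |x| := by
    funext x
    simp [hh.apply_abs]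
  rw [hcomp]
  exact hanti.measurable.comp measurable_norm

lemma norm_apply_le (hh : SymmUnimodal h) (x : ℝ) : ‖h x‖ ≤ h 0 := by
  rw [Real.norm_of_nonneg (hh.nonneg x)]
  exact hh.apply_le_of_abs_le (by simp)

lemma integrable_comp (hh : SymmUnimodal h) {α : Type*} [MeasurableSpace α] {μ : Measure α}
    [IsFiniteMeasure μ] {f : α → ℝ} (hf : Measurable f) : Integrable (fun x ↦ h (f x)) μ :=
  .of_bound (hh.measurable.comp hf).aestronglyMeasurable (h 0)
    (.of_forall fun _ ↦ hh.norm_apply_le _)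

lemma intervalIntegrable_comp (hh : SymmUnimodal h) {f : ℝ → ℝ} (hf : Measurable f) (x y : ℝ) :
    IntervalIntegrable (fun u ↦ h (f u)) volume x y :=
  ⟨hh.integrable_comp hf, hh.integrable_comp hf⟩

lemma intervalIntegrable (hh : SymmUnimodal h) (x y : ℝ) : IntervalIntegrable h volume x y :=
  hh.intervalIntegrable_comp measurable_id x y

lemma apply_mul_le (hh : SymmUnimodal h) {b d : ℝ} (hbd : |b| ≤ |d|) (u : ℝ) :
    h (d * u) ≤ h (b * u) :=
  hh.apply_le_of_abs_le (by simp only [abs_mul]; gcongr)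

protected lemma smear (hh : SymmUnimodal h) (b : ℝ) : SymmUnimodal (smear b h) := by
  refine ⟨even_smear hh.even b, ?_, fun c ↦
    intervalIntegral.integral_nonneg (by norm_num) fun u _ ↦ hh.nonneg _⟩
  rw [← smear_abs_left]
  rcases (abs_nonneg b).eq_or_lt with hb | hb
  · rw [← hb, smear_zero_left]
    exact fun x hx y hy hxy ↦ by simpa using hh.antitoneOn hx hy hxy
  · intro c hc d _ hcd
    rw [← sub_nonneg, smear_sub_smear hh.intervalIntegrable hb.ne']
    refine mul_nonneg (by positivity) (intervalIntegral.integral_nonneg hcd fun x hx ↦ ?_)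
    have hx0 : 0 ≤ x := le_trans hc hx.1
    exact sub_nonneg.2 (hh.apply_le_of_abs_le (abs_le_abs (by linarith) (by linarith)))

lemma smear_comm (hh : SymmUnimodal h) (b d : ℝ) :
    smear b (smear d h) = smear d (smear b h) := by
  funext x
  unfold smear
  rw [intervalIntegral_intervalIntegral_swap]
  · simp only [add_right_comm]
  · rw [IntegrableOn, Measure.volume_eq_prod, ← Measure.prod_restrict,
      uIoc_of_le (by norm_num : (-1 : ℝ) ≤ 1)]
    exact hh.integrable_comp (f := fun p : ℝ × ℝ ↦ x + b * p.1 + d * p.2) (by fun_prop)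

lemma smear_apply_zero (hh : SymmUnimodal h) (b : ℝ) :
    smear b h 0 = 2 * ∫ u in (0 : ℝ)..1, h (b * u) := by
  have hint (x y : ℝ) : IntervalIntegrable (fun u ↦ h (b * u)) volume x y :=
    hh.intervalIntegrable_comp (by fun_prop) x y
  have hleft : ∫ u in (-1 : ℝ)..0, h (b * u) = ∫ u in (0 : ℝ)..1, h (b * u) := by
    simpa [hh.even _] using
      (intervalIntegral.integral_comp_neg (a := 0) (b := 1) fun u ↦ h (b * u)).symm
  simp only [smear, zero_add]
  rw [← intervalIntegral.integral_add_adjacent_intervals (hint _ 0) (hint _ _), hleft, two_mul]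

lemma smear_apply_zero_le (hh : SymmUnimodal h) {b d : ℝ} (hbd : |b| ≤ |d|) :
    smear d h 0 ≤ smear b h 0 := by
  rw [hh.smear_apply_zero, hh.smear_apply_zero]
  gcongr
  exact intervalIntegral.integral_mono zero_le_one (hh.intervalIntegrable_comp (by fun_prop) _ _)
    (hh.intervalIntegrable_comp (by fun_prop) _ _) (hh.apply_mul_le hbd)

lemma two_mul_apply_le_smear (hh : SymmUnimodal h) (b : ℝ) :
    2 * h b ≤ smear b h 0 := by
  have hconst : ∫ _ in (0 : ℝ)..1, h b ≤ ∫ u in (0 : ℝ)..1, h (b * u) := by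
    refine intervalIntegral.integral_mono_on zero_le_one (by simp)
      (hh.intervalIntegrable_comp (by fun_prop) _ _) fun u hu ↦ hh.apply_le_of_abs_le ?_
    rw [abs_mul]
    exact mul_le_of_le_one_right (abs_nonneg b) (abs_le.2 ⟨by linarith [hu.1], hu.2⟩)
  rw [hh.smear_apply_zero]
  simpa using hconst

lemma smear_one_apply_zero_lt (hh : SymmUnimodal h) (hanti : StrictAntiOn h (Icc 0 1)) {b : ℝ}
    (hb : |b| < 1) : smear 1 h 0 < smear b h 0 := by
  have hint (d : ℝ) : IntervalIntegrable (fun u ↦ h (d * u)) volume 0 1 :=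
    hh.intervalIntegrable_comp (by fun_prop) _ _
  have hlt : ∀ u ∈ Ioo (0 : ℝ) 1, 0 < h (b * u) - h (1 * u) := by
    intro u hu
    have hbu : |b * u| < u := by
      rw [abs_mul, abs_of_pos hu.1]
      exact mul_lt_of_lt_one_left hu.1 hb
    rw [sub_pos, one_mul, ← hh.apply_abs (b * u)]
    exact hanti ⟨abs_nonneg _, hbu.le.trans hu.2.le⟩ ⟨hu.1.le, hu.2.le⟩ hbu
  rw [hh.smear_apply_zero, hh.smear_apply_zero]
  gcongr
  rw [← sub_pos, ← intervalIntegral.integral_sub (hint b) (hint 1)]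
  exact intervalIntegral.intervalIntegral_pos_of_pos_on ((hint b).sub (hint 1)) hlt one_pos

lemma strictAntiOn_smear_one (hh : SymmUnimodal h)
    (hdrop : ∀ x ∈ Ioo (0 : ℝ) 1, h (1 + x) < h (1 - x)) :
    StrictAntiOn (smear 1 h) (Icc 0 1) := by
  intro c hc d hd hcd
  have hint : IntervalIntegrable (fun x ↦ h (x - 1) - h (x + 1)) volume c d :=
    (hh.intervalIntegrable_comp (by fun_prop) _ _).sub
      (hh.intervalIntegrable_comp (by fun_prop) _ _)
  rw [← sub_pos, smear_sub_smear hh.intervalIntegrable one_ne_zero, inv_one, one_smul]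
  refine intervalIntegral.intervalIntegral_pos_of_pos_on hint (fun x hx ↦ sub_pos.2 ?_) hcd
  rw [← hh.even (x - 1), neg_sub, add_comm x]
  exact hdrop x ⟨hc.1.trans_lt hx.1, hx.2.trans_le hd.2⟩

end SymmUnimodal

lemma window_apply (δ x : ℝ) : window δ x = if |x| < δ then 1 else 0 := by
  simp [window, indicator]

lemma symmUnimodal_window (δ : ℝ) : SymmUnimodal (window δ) where
  even x := by simp [window_apply]
  antitoneOn x hx y hy hxy := by
    simp only [window_apply, abs_of_nonneg (mem_Ici.1 hx), abs_of_nonneg (mem_Ici.1 hy)]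
    split_ifs <;> linarith
  nonneg := indicator_nonneg (by simp)

lemma mul_smear_eq_integral_window {b : ℝ} (hb : 0 < b) {h : ℝ → ℝ} (c : ℝ) :
    b * smear b h c = ∫ x, window b x * h (c - x) := by
  have hset : ∫ x, window b x * h (c - x) = ∫ x in (-b)..b, h (c - x) := by
    rw [intervalIntegral.integral_of_le (by linarith), integral_Ioc_eq_integral_Ioo,
      ← integral_indicator measurableSet_Ioo]
    simp [window, Real.ball_eq_Ioo, indicator]
  rw [hset, intervalIntegral.integral_comp_sub_left, sub_neg_eq_add,
    smear_eq_inv_smul_integral hb.ne', smul_eq_mul, mul_inv_cancel_left₀ hb.ne']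

lemma mul_smear_window_comm {b δ : ℝ} (hb : 0 < b) (hδ : 0 < δ) (c : ℝ) :
    b * smear b (window δ) c = δ * smear δ (window b) c := by
  rw [mul_smear_eq_integral_window hb, mul_smear_eq_integral_window hδ,
    ← integral_sub_left_eq_self _ volume c]
  simp only [sub_sub_cancel, mul_comm]

/-- The `m`-fold smearing of the indicator of `(-1, 1)`: the density of a sum of `m + 1`
independent uniform variables on `[-1, 1]`, multiplied by `2 ^ (m + 1)`. -/
noncomputable def uniformSumDensity (m : ℕ) : ℝ → ℝ :=
  (smear 1)^[m] (window 1)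

lemma uniformSumDensity_succ (m : ℕ) :
    uniformSumDensity (m + 1) = smear 1 (uniformSumDensity m) :=
  Function.iterate_succ_apply' _ _ _

lemma symmUnimodal_uniformSumDensity (m : ℕ) : SymmUnimodal (uniformSumDensity m) := by
  induction m with
  | zero => exact symmUnimodal_window 1
  | succ m ih =>
    rw [uniformSumDensity_succ]
    exact ih.smear 1

lemma continuous_uniformSumDensity_succ (m : ℕ) : Continuous (uniformSumDensity (m + 1)) := by
  rw [uniformSumDensity_succ]
  exact continuous_smear (symmUnimodal_uniformSumDensity m).intervalIntegrable one_ne_zero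

lemma strictAntiOn_uniformSumDensity_succ (m : ℕ) :
    StrictAntiOn (uniformSumDensity (m + 1)) (Icc 0 1) := by
  induction m with
  | zero =>
    refine (symmUnimodal_window 1).strictAntiOn_smear_one fun x hx ↦ ?_
    have hout : ¬|1 + x| < 1 := by grind
    have hin : |1 - x| < 1 := by grind
    simp [window_apply, hout, hin]
  | succ m ih =>
    have hunimodal := symmUnimodal_uniformSumDensity (m + 1)
    rw [uniformSumDensity_succ]
    refine hunimodal.strictAntiOn_smear_one fun x hx ↦ ?_
    calc uniformSumDensity (m + 1) (1 + x)
        ≤ uniformSumDensity (m + 1) 1 :=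
          hunimodal.antitoneOn (mem_Ici.2 zero_le_one) (by grind) (by grind)
      _ < uniformSumDensity (m + 1) (1 - x) := ih (by grind) (by grind) (by grind)

lemma uniformSumDensity_add_two_apply_zero_lt_smear (m : ℕ) {b : ℝ} (hb : |b| < 1) :
    uniformSumDensity (m + 2) 0 < smear b (uniformSumDensity (m + 1)) 0 := by
  rw [uniformSumDensity_succ]
  exact (symmUnimodal_uniformSumDensity _).smear_one_apply_zero_lt
    (strictAntiOn_uniformSumDensity_succ m) hb

lemma uniformSumDensity_apply_zero_le (m : ℕ) : uniformSumDensity m 0 ≤ 2 ^ m := by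
  induction m with
  | zero => simp [uniformSumDensity, window_apply]
  | succ m ih =>
    calc uniformSumDensity (m + 1) 0 ≤ smear 0 (uniformSumDensity m) 0 := by
          rw [uniformSumDensity_succ]
          exact (symmUnimodal_uniformSumDensity m).smear_apply_zero_le (by simp)
      _ = 2 * uniformSumDensity m 0 := by simp [smear_zero_left]
      _ ≤ 2 ^ (m + 1) := by rw [pow_succ']; gcongr

lemma uniformSumDensity_add_two_apply_zero_lt (m : ℕ) : uniformSumDensity (m + 2) 0 < 2 ^ (m + 2) :=
  calc uniformSumDensity (m + 2) 0 < smear 0 (uniformSumDensity (m + 1)) 0 :=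
        uniformSumDensity_add_two_apply_zero_lt_smear m (by simp)
    _ = 2 * uniformSumDensity (m + 1) 0 := by simp [smear_zero_left]
    _ ≤ 2 ^ (m + 2) := by
        rw [pow_succ']
        gcongr
        exact uniformSumDensity_apply_zero_le (m + 1)

lemma uniformSumDensity_succ_apply_zero_pos (m : ℕ) : 0 < uniformSumDensity (m + 1) 0 :=
  ((symmUnimodal_uniformSumDensity _).nonneg 1).trans_lt
    (strictAntiOn_uniformSumDensity_succ m (by simp) (by simp) one_pos)

/-! ### Fourier inversion -/

lemma integrable_comp_shear {E : Type*} [NormedAddCommGroup E] {f : ℝ → E} (hf : Integrable f)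
    (b : ℝ) (ν : Measure ℝ) [IsFiniteMeasure ν] :
    Integrable (fun p : ℝ × ℝ ↦ f (p.2 + b * p.1)) (ν.prod volume) := by
  have hshear : MeasurePreserving (fun p : ℝ × ℝ ↦ (p.1, p.2 + b * p.1)) (ν.prod volume)
      (ν.prod volume) :=
    (MeasurePreserving.id ν).skew_product (g := fun u v ↦ v + b * u) (by fun_prop)
      (.of_forall fun u ↦ (measurePreserving_add_right volume _).map_eq)
  exact hshear.integrable_comp_of_integrable (hf.comp_snd ν)

lemma integrable_smear {E : Type*} [NormedAddCommGroup E] [NormedSpace ℝ E] {f : ℝ → E}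
    (hf : Integrable f) (b : ℝ) : Integrable (smear b f) := by
  have hsmear : smear b f = fun c ↦ ∫ u in Ioc (-1 : ℝ) 1, f (c + b * u) :=
    funext fun c ↦ intervalIntegral.integral_of_le (by norm_num)
  rw [hsmear]
  exact (integrable_comp_shear hf b _).integral_prod_right

lemma integral_cexp_mul_I_neg_one_one (w : ℝ) :
    ∫ u in (-1 : ℝ)..1, Complex.exp ((w * u : ℝ) * Complex.I) = (2 * Real.sinc w : ℝ) := by
  rcases eq_or_ne w 0 with rfl | hw
  · norm_num
  · have hw' : (w : ℂ) ≠ 0 := mod_cast hw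
    rw [intervalIntegral.integral_comp_mul_left (fun t : ℝ ↦ Complex.exp (t * Complex.I)) hw,
      mul_neg_one, mul_one, integral_exp_mul_I_eq_sinc, Complex.real_smul]
    push_cast
    field_simp

section Fourier

variable {E : Type*} [NormedAddCommGroup E] [NormedSpace ℂ E]

lemma fourier_comp_add_right (f : ℝ → E) (x w : ℝ) :
    𝓕 (fun v ↦ f (v + x)) w = Complex.exp ((2 * Real.pi * w * x : ℝ) * Complex.I) • 𝓕 f w := by
  simp only [Real.fourier_real_eq_integral_exp_smul]
  rw [← integral_smul, ← integral_sub_right_eq_self _ x]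
  refine integral_congr_ae (.of_forall fun v ↦ ?_)
  simp only [sub_add_cancel, smul_smul, ← Complex.exp_add]
  push_cast
  ring_nf

lemma fourier_smear [CompleteSpace E] {f : ℝ → E} (hf : Integrable f) (b w : ℝ) :
    𝓕 (smear b f) w = (2 * Real.sinc (2 * Real.pi * b * w) : ℝ) • 𝓕 f w := by
  have hint : Integrable (fun p : ℝ × ℝ ↦
      Complex.exp ((-2 * Real.pi * p.2 * w : ℝ) * Complex.I) • f (p.2 + b * p.1))
      ((volume.restrict (uIoc (-1) 1)).prod volume) := by
    rw [uIoc_of_le (by norm_num)]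
    refine (integrable_comp_shear hf b _).bdd_smul (C := 1) (by fun_prop) ?_
    exact .of_forall fun p ↦ by rw [Complex.norm_exp_ofReal_mul_I]
  calc 𝓕 (smear b f) w
    _ = ∫ v : ℝ, ∫ u in (-1 : ℝ)..1,
          Complex.exp ((-2 * Real.pi * v * w : ℝ) * Complex.I) • f (v + b * u) := by
        rw [Real.fourier_real_eq_integral_exp_smul]
        simp only [smear, intervalIntegral.integral_smul]
    _ = ∫ u in (-1 : ℝ)..1, 𝓕 (fun v ↦ f (v + b * u)) w := by
        rw [← intervalIntegral_integral_swap hint]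
        simp only [Real.fourier_real_eq_integral_exp_smul]
    _ = (∫ u in (-1 : ℝ)..1,
          Complex.exp ((2 * Real.pi * b * w * u : ℝ) * Complex.I)) • 𝓕 f w := by
        rw [← intervalIntegral.integral_smul_const]
        refine intervalIntegral.integral_congr fun u _ ↦ ?_
        simp only [fourier_comp_add_right]
        ring_nf
    _ = _ := by rw [integral_cexp_mul_I_neg_one_one, Complex.coe_smul]

end Fourier

lemma integrable_window (δ : ℝ) : Integrable (window δ) :=
  (integrable_indicator_iff measurableSet_ball).2 (integrableOn_const measure_ball_lt_top.ne)

lemma fourier_window_one (w : ℝ) :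
    𝓕 (fun x ↦ (window 1 x : ℂ)) w = (2 * Real.sinc (2 * Real.pi * w) : ℝ) := by
  calc 𝓕 (fun x ↦ (window 1 x : ℂ)) w
    _ = ∫ v, (Ioo (-1 : ℝ) 1).indicator
          (fun v : ℝ ↦ Complex.exp ((-(2 * Real.pi * w) * v : ℝ) * Complex.I)) v := by
        rw [Real.fourier_real_eq_integral_exp_smul]
        refine integral_congr_ae (.of_forall fun v ↦ ?_)
        by_cases hv : v ∈ Ioo (-1 : ℝ) 1
        · simp [window, Real.ball_eq_Ioo, hv, indicator_of_mem, mul_right_comm]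
        · simp [window, Real.ball_eq_Ioo, hv]
    _ = ∫ v in (-1 : ℝ)..1, Complex.exp ((-(2 * Real.pi * w) * v : ℝ) * Complex.I) := by
        rw [integral_indicator measurableSet_Ioo, ← integral_Ioc_eq_integral_Ioo,
          ← intervalIntegral.integral_of_le (by norm_num)]
    _ = _ := by rw [integral_cexp_mul_I_neg_one_one, Real.sinc_neg]

lemma integrable_uniformSumDensity (m : ℕ) : Integrable (uniformSumDensity m) := by
  induction m with
  | zero => exact integrable_window 1
  | succ m ih =>
    rw [uniformSumDensity_succ]
    exact integrable_smear ih 1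

lemma fourier_uniformSumDensity (m : ℕ) (w : ℝ) :
    𝓕 (fun x ↦ (uniformSumDensity m x : ℂ)) w =
      ((2 * Real.sinc (2 * Real.pi * w)) ^ (m + 1) : ℝ) := by
  induction m with
  | zero => simpa [uniformSumDensity] using fourier_window_one w
  | succ m ih =>
    have hsmear : (fun x ↦ (uniformSumDensity (m + 1) x : ℂ)) =
        smear 1 fun x ↦ (uniformSumDensity m x : ℂ) := by
      rw [uniformSumDensity_succ]
      exact funext fun x ↦ intervalIntegral.integral_ofReal.symm
    rw [hsmear, fourier_smear (integrable_uniformSumDensity m).ofReal, ih, mul_one,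
      Complex.real_smul, ← Complex.ofReal_mul, ← pow_succ']

lemma sinc_sq_le (t : ℝ) : Real.sinc t ^ 2 ≤ 2 * (1 + t ^ 2)⁻¹ := by
  have hle_one : Real.sinc t ^ 2 ≤ 1 := (sq_le_one_iff_abs_le_one _).2 (Real.abs_sinc_le_one t)
  have hmul_le_one : Real.sinc t ^ 2 * t ^ 2 ≤ 1 := by
    rcases eq_or_ne t 0 with rfl | ht
    · simp
    · rw [Real.sinc_of_ne_zero ht, div_pow, div_mul_cancel₀ _ (pow_ne_zero 2 ht)]
      exact Real.sin_sq_le_one t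
  rw [← div_eq_mul_inv, le_div_iff₀ (by positivity)]
  linarith

lemma integrable_sinc_pow {n : ℕ} (hn : 2 ≤ n) : Integrable fun t : ℝ ↦ Real.sinc t ^ n := by
  refine (integrable_inv_one_add_sq.const_mul 2).mono' (by fun_prop) (.of_forall fun t ↦ ?_)
  calc ‖Real.sinc t ^ n‖ = |Real.sinc t| ^ n := by rw [norm_pow, Real.norm_eq_abs]
    _ ≤ |Real.sinc t| ^ 2 :=
        pow_le_pow_of_le_one (abs_nonneg _) (Real.abs_sinc_le_one t) hn
    _ = Real.sinc t ^ 2 := sq_abs _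
    _ ≤ _ := sinc_sq_le t

lemma integral_sinc_pow_eq_pi_mul_sigma (n : ℕ) : ∫ t, Real.sinc t ^ n = Real.pi * sigma n := by
  have heven (t : ℝ) : Real.sinc t ^ n = Real.sinc |t| ^ n := by
    rcases abs_choice t with ht | ht <;> simp [ht, Real.sinc_neg]
  have hsin : ∫ t in Ioi (0 : ℝ), Real.sinc t ^ n = ∫ t in Ioi (0 : ℝ), (Real.sin t / t) ^ n :=
    setIntegral_congr_fun measurableSet_Ioi fun t ht ↦ by
      simp only [Real.sinc_of_ne_zero (ne_of_gt ht)]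
  rw [integral_congr_ae (.of_forall heven)]
  rw [integral_comp_abs (f := fun t ↦ Real.sinc t ^ n), hsin, sigma]
  field_simp

lemma uniformSumDensity_succ_apply_zero (m : ℕ) :
    uniformSumDensity (m + 1) 0 = 2 ^ (m + 1) * sigma (m + 2) := by
  set D : ℝ → ℂ := fun x ↦ (uniformSumDensity (m + 1) x : ℂ) with hD
  have hfourier : 𝓕 D = fun w ↦ (((2 * Real.sinc (2 * Real.pi * w)) ^ (m + 2) : ℝ) : ℂ) :=
    funext (fourier_uniformSumDensity (m + 1))
  have hfourier_int : Integrable (𝓕 D) := by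
    simp only [hfourier, mul_pow]
    exact (((integrable_sinc_pow (by omega)).comp_mul_left' (by positivity)).const_mul _).ofReal
  have hinv : ∫ w, 𝓕 D w = D 0 := by
    rw [← (integrable_uniformSumDensity (m + 1)).ofReal.fourierInv_fourier_eq hfourier_int
      (Complex.continuous_ofReal.comp (continuous_uniformSumDensity_succ m)).continuousAt,
      Real.fourierInv_eq']
    simp [hD]
  rw [hfourier, integral_complex_ofReal, Complex.ofReal_inj] at hinv
  rw [← hinv, Measure.integral_comp_mul_left (fun t ↦ (2 * Real.sinc t) ^ (m + 2))]
  simp only [mul_pow, integral_const_mul, integral_sinc_pow_eq_pi_mul_sigma, smul_eq_mul]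
  rw [abs_of_pos (by positivity)]
  field_simp
  ring

lemma sigma_pos {n : ℕ} (hn : 2 ≤ n) : 0 < sigma n := by
  obtain ⟨m, rfl⟩ : ∃ m, n = m + 2 := ⟨n - 2, by omega⟩
  have hpos := uniformSumDensity_succ_apply_zero_pos m
  rw [uniformSumDensity_succ_apply_zero] at hpos
  exact pos_of_mul_pos_right hpos (by positivity)

lemma sigma_lt_one {n : ℕ} (hn : 3 ≤ n) : sigma n < 1 := by
  obtain ⟨m, rfl⟩ : ∃ m, n = m + 3 := ⟨n - 3, by omega⟩
  have hlt := uniformSumDensity_add_two_apply_zero_lt m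
  rw [uniformSumDensity_succ_apply_zero] at hlt
  exact lt_of_mul_lt_mul_left (by rwa [mul_one]) (by positivity : (0 : ℝ) ≤ 2 ^ (m + 2))

/-! ### Slabs of the cube -/

section Cube

variable {n : ℕ}

/-- The integral of `h (c + a ⬝ᵥ u)` over the cube `[-1, 1]ⁿ`. For `h = window ε` and `c = 0` it is
the volume of the slab `|a ⬝ᵥ u| < ε` of the cube. -/
noncomputable def cubeSmear (a : Fin n → ℝ) (h : ℝ → ℝ) (c : ℝ) : ℝ :=
  ∫ u in Metric.closedBall 0 1, h (c + a ⬝ᵥ u)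

/-- The part of the cube `[-1, 1]^ι` within the slab `|a ⬝ᵥ u| < ε`; the norm is the sup norm. -/
def cubeSlab {ι : Type*} [Fintype ι] (a : ι → ℝ) (ε : ℝ) : Set (ι → ℝ) :=
  {u | ‖u‖ ≤ 1 ∧ |a ⬝ᵥ u| < ε}

lemma volume_restrict_closedBall_pi :
    (volume : Measure (Fin n → ℝ)).restrict (Metric.closedBall 0 1) =
      .pi fun _ ↦ volume.restrict (Ioc (-1) 1) := by
  rw [closedBall_pi _ zero_le_one, volume_pi, Measure.restrict_pi_pi]
  simp only [Pi.zero_apply, Real.closedBall_eq_Icc, zero_sub, zero_add,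
    restrict_Ioc_eq_restrict_Icc]

lemma cubeSmear_of_fin_zero (a : Fin 0 → ℝ) (h : ℝ → ℝ) : cubeSmear a h = h := by
  funext c
  simp [cubeSmear, measureReal_def]

lemma SymmUnimodal.cubeSmear_eq_smear {h : ℝ → ℝ} (hh : SymmUnimodal h) (a : Fin (n + 1) → ℝ)
    (i : Fin (n + 1)) : cubeSmear a h = smear (a i) (cubeSmear (i.removeNth a) h) := by
  funext c
  have hsplit := (measurePreserving_piFinSuccAbove
    (fun _ : Fin (n + 1) ↦ volume.restrict (Ioc (-1 : ℝ) 1)) i).symm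
  have hdot (p : ℝ × (Fin n → ℝ)) : a ⬝ᵥ (MeasurableEquiv.piFinSuccAbove (fun _ ↦ ℝ) i).symm p =
      a i * p.1 + i.removeNth a ⬝ᵥ p.2 := by
    change a ⬝ᵥ i.insertNth p.1 p.2 = _
    simp [dotProduct, Fin.sum_univ_succAbove _ i, Fin.removeNth]
  simp only [cubeSmear, smear, volume_restrict_closedBall_pi]
  rw [← hsplit.integral_comp', integral_prod _ (hh.integrable_comp (by fun_prop)),
    intervalIntegral.integral_of_le (by norm_num)]
  simp only [hdot, add_assoc]

protected lemma SymmUnimodal.cubeSmear {h : ℝ → ℝ} (hh : SymmUnimodal h) (a : Fin n → ℝ) :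
    SymmUnimodal (cubeSmear a h) := by
  induction n with
  | zero => rwa [cubeSmear_of_fin_zero]
  | succ n ih =>
    rw [hh.cubeSmear_eq_smear a 0]
    exact (ih _).smear _

lemma SymmUnimodal.cubeSmear_smear {h : ℝ → ℝ} (hh : SymmUnimodal h) (a : Fin n → ℝ) (b : ℝ) :
    cubeSmear a (smear b h) = smear b (cubeSmear a h) := by
  induction n with
  | zero => simp only [cubeSmear_of_fin_zero]
  | succ n ih =>
    rw [(hh.smear b).cubeSmear_eq_smear a 0, hh.cubeSmear_eq_smear a 0, ih,
      (hh.cubeSmear _).smear_comm]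

lemma SymmUnimodal.iterate_smear_one_apply_zero_le {h : ℝ → ℝ} (hh : SymmUnimodal h)
    {a : Fin n → ℝ} (ha : ∀ i, |a i| ≤ 1) : (smear 1)^[n] h 0 ≤ cubeSmear a h 0 := by
  induction n generalizing h with
  | zero => simp [cubeSmear_of_fin_zero]
  | succ n ih =>
    calc (smear 1)^[n + 1] h 0 = (smear 1)^[n] (smear 1 h) 0 := by rw [Function.iterate_succ_apply]
      _ ≤ cubeSmear (Fin.removeNth 0 a) (smear 1 h) 0 := ih (hh.smear 1) fun i ↦ ha _
      _ = smear 1 (cubeSmear (Fin.removeNth 0 a) h) 0 := by rw [hh.cubeSmear_smear]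
      _ ≤ smear (a 0) (cubeSmear (Fin.removeNth 0 a) h) 0 :=
          (hh.cubeSmear _).smear_apply_zero_le (by simpa using ha 0)
      _ = cubeSmear a h 0 := by rw [hh.cubeSmear_eq_smear a 0]

lemma volume_real_cubeSlab (a : Fin n → ℝ) (ε : ℝ) :
    volume.real (cubeSlab a ε) = cubeSmear a (window ε) 0 := by
  have hmeas : MeasurableSet {u : Fin n → ℝ | |a ⬝ᵥ u| < ε} :=
    (isOpen_lt (by fun_prop) continuous_const).measurableSet
  have hslab : cubeSlab a ε = {u | |a ⬝ᵥ u| < ε} ∩ Metric.closedBall 0 1 := by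
    ext u
    simp [cubeSlab, and_comm]
  have hwindow (u : Fin n → ℝ) :
      window ε (0 + a ⬝ᵥ u) = {u : Fin n → ℝ | |a ⬝ᵥ u| < ε}.indicator 1 u := by
    simp [window_apply, indicator]
  simp only [cubeSmear, hwindow]
  rw [integral_indicator_one hmeas, measureReal_restrict_apply hmeas, hslab]

lemma SymmUnimodal.smear_iterate_smear_one {h : ℝ → ℝ} (hh : SymmUnimodal h) (b : ℝ) (m : ℕ) :
    smear b ((smear 1)^[m] h) = (smear 1)^[m] (smear b h) := by
  induction m generalizing h with
  | zero => rfl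
  | succ m ih =>
    rw [Function.iterate_succ_apply, ih (hh.smear 1), hh.smear_comm, Function.iterate_succ_apply]

lemma iterate_smear_one_window {δ : ℝ} (hδ : 0 < δ) (m : ℕ) :
    (smear 1)^[m + 1] (window δ) = fun x ↦ δ * smear δ (uniformSumDensity m) x := by
  induction m with
  | zero =>
    funext x
    simpa [uniformSumDensity] using mul_smear_window_comm one_pos hδ x
  | succ m ih =>
    rw [Function.iterate_succ_apply', ih, smear_const_mul, uniformSumDensity_succ,
      (symmUnimodal_uniformSumDensity m).smear_comm]

lemma two_mul_mul_smear_uniformSumDensity_le_volume {a : Fin (n + 2) → ℝ} (ha : ∀ i, |a i| ≤ 1)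
    (j : Fin (n + 2)) {δ : ℝ} (hδ : 0 < δ) :
    2 * δ * smear (a j) (uniformSumDensity n) δ ≤ volume.real (cubeSlab a δ) := by
  have hD := symmUnimodal_uniformSumDensity n
  have hwindow := symmUnimodal_window δ
  calc 2 * δ * smear (a j) (uniformSumDensity n) δ
      = δ * (2 * smear (a j) (uniformSumDensity n) δ) := by ring
    _ ≤ δ * smear δ (smear (a j) (uniformSumDensity n)) 0 := by
        gcongr
        exact (hD.smear _).two_mul_apply_le_smear δ
    _ = smear (a j) ((smear 1)^[n + 1] (window δ)) 0 := by
        rw [iterate_smear_one_window hδ, smear_const_mul, hD.smear_comm]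
    _ = (smear 1)^[n + 1] (smear (a j) (window δ)) 0 := by rw [hwindow.smear_iterate_smear_one]
    _ ≤ cubeSmear (j.removeNth a) (smear (a j) (window δ)) 0 :=
        (hwindow.smear _).iterate_smear_one_apply_zero_le fun i ↦ ha _
    _ = volume.real (cubeSlab a δ) := by
        rw [hwindow.cubeSmear_smear, ← hwindow.cubeSmear_eq_smear, volume_real_cubeSlab]

lemma exists_sigma_mul_lt_volume_cubeSlab_of_le_one (hn : 3 ≤ n) {a : Fin n → ℝ}
    (ha : ∀ i, |a i| ≤ 1) {j : Fin n} (hj : |a j| < 1) :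
    ∃ δ > 0, 2 ^ n * sigma n * δ < volume.real (cubeSlab a δ) := by
  obtain ⟨m, rfl⟩ : ∃ m, n = m + 3 := ⟨n - 3, by omega⟩
  have hcont : Continuous (smear (a j) (uniformSumDensity (m + 1))) := by
    have hD := symmUnimodal_uniformSumDensity m
    rw [uniformSumDensity_succ, hD.smear_comm]
    exact continuous_smear (hD.smear _).intervalIntegrable one_ne_zero
  have hzero : 2 ^ (m + 2) * sigma (m + 3) < smear (a j) (uniformSumDensity (m + 1)) 0 := by
    rw [← uniformSumDensity_succ_apply_zero]
    exact uniformSumDensity_add_two_apply_zero_lt_smear m hj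
  obtain ⟨δ, hδ, hlt⟩ := (hcont.continuousAt.eventually_const_lt hzero).exists_gt
  refine ⟨δ, hδ, ?_⟩
  calc 2 ^ (m + 3) * sigma (m + 3) * δ = 2 * δ * (2 ^ (m + 2) * sigma (m + 3)) := by ring
    _ < 2 * δ * smear (a j) (uniformSumDensity (m + 1)) δ := by gcongr
    _ ≤ _ := two_mul_mul_smear_uniformSumDensity_le_volume ha j hδ

end Cube

/-! ### Integer points on a hyperplane -/

section Lattice

variable {ι : Type*} [Fintype ι]

lemma exists_ne_zero_int_vector_mem_of_two_pow_lt_volume {s : Set (ι → ℝ)}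
    (hsymm : ∀ x ∈ s, -x ∈ s) (hconv : Convex ℝ s) (hvol : 2 ^ Fintype.card ι < volume s) :
    ∃ x : ι → ℤ, x ≠ 0 ∧ (fun j ↦ (x j : ℝ)) ∈ s := by
  let basis := Pi.basisFun ℝ ι
  have : Countable (Submodule.span ℤ (range basis)).toAddSubgroup :=
    inferInstanceAs (Countable (Submodule.span ℤ (range basis)))
  have hcovolume : volume (ZSpan.fundamentalDomain basis) = 1 := by
    simp [basis, ZSpan.fundamentalDomain_pi_basisFun, Real.volume_pi_Ico]
  obtain ⟨⟨y, hy⟩, hy0, hys⟩ := exists_ne_zero_mem_lattice_of_measure_mul_two_pow_lt_measure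
    (ZSpan.isAddFundamentalDomain' basis volume) hsymm hconv
    (by rwa [hcovolume, one_mul, Module.finrank_fintype_fun_eq_card])
  have hint : ∀ j, ∃ z : ℤ, (z : ℝ) = y j := by
    simpa [basis] using (basis.mem_span_iff_repr_mem ℤ y).1 hy
  choose x hx using hint
  obtain rfl : (fun j ↦ (x j : ℝ)) = y := funext hx
  exact ⟨x, by rintro rfl; exact hy0 (Subtype.ext (by ext; simp)), hys⟩

lemma exists_linearMap_det_eq_and_apply_eq_mul {K V : Type*} [Field K] [AddCommGroup V] [Module K V]
    [FiniteDimensional K V] {f : Module.Dual K V} (hf : f ≠ 0) (k : K) :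
    ∃ T : V →ₗ[K] V, LinearMap.det T = k ∧ (∀ x, f (T x) = k * f x) ∧
      ∀ x, f x = 0 → T x = x := by
  obtain ⟨v, hv⟩ := LinearMap.surjective hf (k - 1)
  refine ⟨LinearMap.transvection f v, ?_, fun x ↦ ?_, fun x hx ↦ ?_⟩
  · rw [LinearMap.transvection.det, hv, add_sub_cancel]
  · rw [LinearMap.transvection.apply, map_add, map_smul, hv, smul_eq_mul]
    ring
  · rw [LinearMap.transvection.apply, hx, zero_smul, add_zero]

-- Stretching transversally to the hyperplane by `ε⁻¹` leaves it pointwise fixed and forces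
-- `|a ⬝ᵥ x| < 1`, so that Minkowski's theorem yields an integer point on the hyperplane itself.
lemma exists_ne_zero_int_vector_mem_of_dotProduct_lt {a : ι → ℤ} (ha : a ≠ 0) {s : Set (ι → ℝ)}
    (hsymm : ∀ x ∈ s, -x ∈ s) (hconv : Convex ℝ s) {ε : ℝ} (hε : 0 < ε)
    (hs : ∀ x ∈ s, |(fun j ↦ (a j : ℝ)) ⬝ᵥ x| < ε)
    (hvol : 2 ^ Fintype.card ι * ENNReal.ofReal ε < volume s) :
    ∃ x : ι → ℤ, x ≠ 0 ∧ a ⬝ᵥ x = 0 ∧ (fun j ↦ (x j : ℝ)) ∈ s := by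
  classical
  set f := dotProductEquiv ℝ ι fun j ↦ (a j : ℝ)
  have hf : f ≠ 0 := by simpa [f, funext_iff] using ha
  obtain ⟨T, hdet, hfT, hfix⟩ := exists_linearMap_det_eq_and_apply_eq_mul hf ε
  have hvol_preimage : 2 ^ Fintype.card ι < volume (T ⁻¹' s) := by
    have hpos : 0 < ENNReal.ofReal ε := ENNReal.ofReal_pos.2 hε
    rw [Measure.addHaar_preimage_linearMap _ (hdet ▸ hε.ne'), hdet, abs_of_pos (inv_pos.2 hε),
      ENNReal.ofReal_inv_of_pos hε, mul_comm, ← div_eq_mul_inv,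
      ENNReal.lt_div_iff_mul_lt (.inl hpos.ne') (.inl ENNReal.ofReal_ne_top)]
    exact hvol
  obtain ⟨x, hx0, hxs⟩ := exists_ne_zero_int_vector_mem_of_two_pow_lt_volume (s := T ⁻¹' s)
    (fun x hx ↦ by simpa using hsymm _ hx) (hconv.linear_preimage T) hvol_preimage
  have hfx : f (fun j ↦ (x j : ℝ)) = (a ⬝ᵥ x : ℤ) := by simp [f, dotProduct]
  have hlt_one : |f fun j ↦ (x j : ℝ)| < 1 := by
    have hlt : |f (T fun j ↦ (x j : ℝ))| < ε * 1 := by simpa [f] using hs _ hxs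
    rw [hfT, abs_mul, abs_of_pos hε] at hlt
    exact lt_of_mul_lt_mul_left hlt hε.le
  have hax : a ⬝ᵥ x = 0 := Int.abs_lt_one_iff.1 (by rw [hfx] at hlt_one; exact_mod_cast hlt_one)
  refine ⟨x, hx0, hax, ?_⟩
  rwa [mem_preimage, hfix _ (by rw [hfx, hax, Int.cast_zero])] at hxs

lemma neg_mem_cubeSlab {a : ι → ℝ} {ε : ℝ} {u : ι → ℝ} (hu : u ∈ cubeSlab a ε) :
    -u ∈ cubeSlab a ε := by
  simpa [cubeSlab] using hu

lemma convex_cubeSlab (a : ι → ℝ) (ε : ℝ) : Convex ℝ (cubeSlab a ε) := by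
  have hslab : cubeSlab a ε =
      Metric.closedBall 0 1 ∩ dotProductBilin ℝ ℝ a ⁻¹' Metric.ball 0 ε := by
    ext u
    simp [cubeSlab]
  rw [hslab]
  exact (convex_closedBall _ _).inter ((convex_ball _ _).linear_preimage _)

lemma volume_cubeSlab_ne_top (a : ι → ℝ) (ε : ℝ) : volume (cubeSlab a ε) ≠ ⊤ :=
  measure_ne_top_of_subset (fun _ hu ↦ mem_closedBall_zero_iff.2 hu.1)
    measure_closedBall_lt_top.ne

lemma cubeSlab_smul {A : ℝ} (hA : 0 < A) (a : ι → ℝ) (ε : ℝ) :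
    cubeSlab (A • a) (A * ε) = cubeSlab a ε := by
  ext u
  simp [cubeSlab, abs_mul, abs_of_pos hA, hA]

open scoped Pointwise in
lemma exists_ne_zero_int_vector_norm_le_of_lt_volume_cubeSlab {a : ι → ℤ} (ha : a ≠ 0) {r ε : ℝ}
    (hr : 0 < r) (hε : 0 < ε)
    (hvol : 2 ^ Fintype.card ι * ε <
      r ^ (Fintype.card ι - 1) * volume.real (cubeSlab (fun j ↦ (a j : ℝ)) ε)) :
    ∃ x : ι → ℤ, x ≠ 0 ∧ a ⬝ᵥ x = 0 ∧ ‖fun j ↦ (x j : ℝ)‖ ≤ r := by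
  obtain ⟨i, -⟩ := Function.ne_iff.1 ha
  have hcard : Fintype.card ι ≠ 0 := (Fintype.card_pos_iff.2 ⟨i⟩).ne'
  set S := cubeSlab (fun j ↦ (a j : ℝ)) ε
  have hvol_smul : 2 ^ Fintype.card ι * ENNReal.ofReal (r * ε) < volume (r • S) := by
    rw [Measure.addHaar_smul_of_nonneg _ hr.le, Module.finrank_fintype_fun_eq_card,
      ← ofReal_measureReal (volume_cubeSlab_ne_top _ _), ← ENNReal.ofReal_mul (by positivity),
      ← ENNReal.ofReal_ofNat 2, ← ENNReal.ofReal_pow (by positivity),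
      ← ENNReal.ofReal_mul (by positivity),
      ENNReal.ofReal_lt_ofReal_iff_of_nonneg (by positivity)]
    calc 2 ^ Fintype.card ι * (r * ε) = r * (2 ^ Fintype.card ι * ε) := by ring
      _ < r * (r ^ (Fintype.card ι - 1) * volume.real S) := by gcongr
      _ = r ^ Fintype.card ι * volume.real S := by rw [← mul_assoc, mul_pow_sub_one hcard]
  have hsymm : ∀ x ∈ r • S, -x ∈ r • S := by
    rintro _ ⟨u, hu, rfl⟩
    exact ⟨-u, neg_mem_cubeSlab hu, smul_neg r u⟩
  have hdot : ∀ x ∈ r • S, |(fun j ↦ (a j : ℝ)) ⬝ᵥ x| < r * ε := by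
    rintro _ ⟨u, hu, rfl⟩
    simpa [abs_mul, abs_of_pos hr, hr] using hu.2
  obtain ⟨x, hx0, hax, u, hu, hux⟩ := exists_ne_zero_int_vector_mem_of_dotProduct_lt ha hsymm
    ((convex_cubeSlab _ _).smul r) (mul_pos hr hε) hdot hvol_smul
  refine ⟨x, hx0, hax, ?_⟩
  rw [← hux]
  simpa [norm_smul, abs_of_pos hr] using mul_le_of_le_one_right hr.le hu.1

lemma exists_ne_zero_int_vector_norm_le_one_of_abs_eq {a : ι → ℤ} {i j : ι} (hij : i ≠ j)
    (haij : |a i| = |a j|) : ∃ x : ι → ℤ, x ≠ 0 ∧ a ⬝ᵥ x = 0 ∧ ‖fun k ↦ (x k : ℝ)‖ ≤ 1 := by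
  classical
  obtain ⟨e, he, hae⟩ : ∃ e : ℤ, |e| = 1 ∧ a i + a j * e = 0 := by
    rcases abs_eq_abs.1 haij with h | h
    · exact ⟨-1, by norm_num, by rw [h]; ring⟩
    · exact ⟨1, by norm_num, by rw [h]; ring⟩
  refine ⟨Pi.single i 1 + Pi.single j e, fun h ↦ ?_, ?_, ?_⟩
  · simpa [hij] using congrFun h i
  · simpa [dotProduct_add] using hae
  · refine (pi_norm_le_iff_of_nonneg zero_le_one).2 fun k ↦ ?_
    rw [Real.norm_eq_abs]
    norm_cast
    rcases eq_or_ne k i with rfl | hki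
    · simp [hij]
    · rcases eq_or_ne k j with rfl | hkj
      · simp [hki, he]
      · simp [hki, hkj]

end Lattice

lemma exists_sigma_mul_lt_volume_cubeSlab {n : ℕ} (hn : 3 ≤ n) {A : ℝ} {a : Fin n → ℝ}
    (ha : ∀ i, |a i| ≤ A) {j : Fin n} (hj : |a j| < A) :
    ∃ ε > 0, 2 ^ n * sigma n * ε < A * volume.real (cubeSlab a ε) := by
  have hA : 0 < A := (abs_nonneg _).trans_lt hj
  obtain ⟨δ, hδ, hvol⟩ := exists_sigma_mul_lt_volume_cubeSlab_of_le_one hn (a := A⁻¹ • a) (j := j)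
    (fun i ↦ by simpa [abs_mul, abs_of_pos hA, inv_mul_le_iff₀ hA] using ha i)
    (by simpa [abs_mul, abs_of_pos hA, inv_mul_lt_iff₀ hA] using hj)
  refine ⟨A * δ, mul_pos hA hδ, ?_⟩
  rw [← cubeSlab_smul hA, smul_inv_smul₀ hA.ne'] at hvol
  calc 2 ^ n * sigma n * (A * δ) = A * (2 ^ n * sigma n * δ) := by ring
    _ < _ := by gcongr

lemma exists_ne_zero_int_vector_norm_pow_lt_of_abs_lt {n : ℕ} (hn : 3 ≤ n) {a : Fin n → ℤ}
    (ha : a ≠ 0) {j : Fin n} (hj : |(a j : ℝ)| < ‖fun j ↦ (a j : ℝ)‖) :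
    ∃ x : Fin n → ℤ, x ≠ 0 ∧ a ⬝ᵥ x = 0 ∧
      ‖fun j ↦ (x j : ℝ)‖ ^ (n - 1) < ‖fun j ↦ (a j : ℝ)‖ / sigma n := by
  have hσ : 0 < sigma n := sigma_pos (by omega)
  obtain ⟨ε, hε, hvol⟩ := exists_sigma_mul_lt_volume_cubeSlab hn
    (norm_le_pi_norm fun j ↦ (a j : ℝ)) hj
  set V := volume.real (cubeSlab (fun j ↦ (a j : ℝ)) ε)
  have hV : 0 < V := pos_of_mul_pos_right (lt_trans (by positivity) hvol) (norm_nonneg _)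
  obtain ⟨q, hqV, hqσ⟩ : ∃ q, 2 ^ n * ε / V < q ∧ q < ‖fun j ↦ (a j : ℝ)‖ / sigma n :=
    exists_between (by rw [div_lt_div_iff₀ hV hσ]; linarith)
  have hq : 0 < q := lt_trans (by positivity) hqV
  have hroot : (q ^ ((n - 1 : ℕ) : ℝ)⁻¹) ^ (n - 1) = q :=
    Real.rpow_inv_natCast_pow hq.le (by omega)
  obtain ⟨x, hx0, hax, hx⟩ := exists_ne_zero_int_vector_norm_le_of_lt_volume_cubeSlab ha
    (Real.rpow_pos_of_pos hq _) hε (by rwa [Fintype.card_fin, hroot, ← div_lt_iff₀ hV])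
  refine ⟨x, hx0, hax, lt_of_le_of_lt ?_ hqσ⟩
  simpa only [hroot] using pow_le_pow_left₀ (norm_nonneg _) hx (n - 1)

theorem siegel_lemma_sigma_general (n : ℕ) (hn : 3 ≤ n) (a : Fin n → ℤ) (ha : a ≠ 0) :
    ∃ x : Fin n → ℤ, x ≠ 0 ∧ (∑ j, a j * x j = 0) ∧
      ‖(fun j => (x j : ℝ))‖ ^ (n - 1) < ‖(fun j => (a j : ℝ))‖ / sigma n := by
  by_cases hall : ∀ j, |(a j : ℝ)| = ‖fun j ↦ (a j : ℝ)‖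
  · have heq : |a ⟨0, by omega⟩| = |a ⟨1, by omega⟩| := by
      exact_mod_cast (hall _).trans (hall _).symm
    obtain ⟨x, hx0, hax, hx⟩ := exists_ne_zero_int_vector_norm_le_one_of_abs_eq (by simp) heq
    obtain ⟨i, hi⟩ := Function.ne_iff.1 ha
    have hnorm : 1 ≤ ‖fun j ↦ (a j : ℝ)‖ := by
      rw [← hall i]
      exact_mod_cast Int.one_le_abs hi
    refine ⟨x, hx0, hax, (pow_le_one₀ (norm_nonneg _) hx).trans_lt ?_⟩
    exact (one_lt_div (sigma_pos (by omega))).2 ((sigma_lt_one hn).trans_le hnorm)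
  · obtain ⟨j, hj⟩ := not_forall.1 hall
    exact exists_ne_zero_int_vector_norm_pow_lt_of_abs_lt hn ha
      ((norm_le_pi_norm (fun j ↦ (a j : ℝ)) j).lt_of_ne hj)

theorem siegel_lemma_sigma (n : ℕ) (hn : 5 ≤ n) (a : Fin n → ℤ) (ha : a ≠ 0) :
    ∃ x : Fin n → ℤ, x ≠ 0 ∧ (∑ j, a j * x j = 0) ∧
      ‖(fun j => (x j : ℝ))‖ ^ (n - 1) < ‖(fun j => (a j : ℝ))‖ / sigma n :=
  siegel_lemma_sigma_general n (by omega) a ha
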